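/- arXiv:2408.02506 — 2 statements merged into one kernel-verified Lean document; each statement's English description precedes it below -/
import Mathlib

section
/- Weak duality for the SDP of the bipartite conditional min-entropy: let K, indexed by A₀ × B₀ × B₁, be positive semidefinite. Suppose (m, X) is primal feasible: X indexed by B₀ × B₁ satisfies Tr_{B₁} X = m • I_{B₀} and K ≤ I_{A₀} ⊗ X. Suppose (M, N) is dual feasible: M indexed by A₀ × B₀ × B₁ is positive semidefinite, N indexed by B₀ is Hermitian with trace 1, and Tr_{A₀} M ≤ N ⊗ I_{B₁}. Then Re (Matrix.trace (M * K)) ≤ m. -/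
open Matrix
open scoped ComplexOrder

noncomputable section

/-- Loewner order on complex matrices: `M ≤ N` iff `N - M` is positive semidefinite. -/
def LoewnerLE {n : Type*} [Fintype n] (M N : Matrix n n ℂ) : Prop := (N - M).PosSemidef

/-- `π_S ⊗ X`, the maximally mixed state on `S` tensored with `X`. -/
def piFst {S T : Type*} [Fintype S] [DecidableEq S] (X : Matrix T T ℂ) :
    Matrix (S × T) (S × T) ℂ :=
  fun x y => ((Fintype.card S : ℂ))⁻¹ * (if x.1 = y.1 then 1 else 0) * X x.2 y.2

/-- `I_S ⊗ X`, the identity on `S` tensored with `X`. -/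
def idFst {S T : Type*} [DecidableEq S] (X : Matrix T T ℂ) :
    Matrix (S × T) (S × T) ℂ :=
  fun x y => (if x.1 = y.1 then 1 else 0) * X x.2 y.2

/-- Partial trace over the second tensor factor. -/
def trOut {S T : Type*} [Fintype T] (X : Matrix (S × T) (S × T) ℂ) : Matrix S S ℂ :=
  fun s s' => ∑ t : T, X (s, t) (s', t)

/-- Partial trace over the first tensor factor. -/
def trInp {S T : Type*} [Fintype S] (X : Matrix (S × T) (S × T) ℂ) : Matrix T T ℂ :=
  fun t t' => ∑ s : S, X (s, t) (s, t')

section FourSystems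

variable {A₀ A₁ B₀ B₁ : Type*} [Fintype A₀] [Fintype A₁] [Fintype B₀] [Fintype B₁]
  [DecidableEq A₀] [DecidableEq A₁] [DecidableEq B₀] [DecidableEq B₁]

/-- `Tr_{A₁}` of a matrix on `A₀ × A₁ × B₀ × B₁`. -/
def trA1 (J : Matrix (A₀ × A₁ × B₀ × B₁) (A₀ × A₁ × B₀ × B₁) ℂ) :
    Matrix (A₀ × B₀ × B₁) (A₀ × B₀ × B₁) ℂ :=
  fun x y => ∑ a : A₁, J (x.1, a, x.2) (y.1, a, y.2)

/-- `Tr_{B₁}` of a matrix on `A₀ × A₁ × B₀ × B₁`. -/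
def trB1 (J : Matrix (A₀ × A₁ × B₀ × B₁) (A₀ × A₁ × B₀ × B₁) ℂ) :
    Matrix (A₀ × A₁ × B₀) (A₀ × A₁ × B₀) ℂ :=
  fun x y => ∑ b : B₁, J (x.1, x.2.1, x.2.2, b) (y.1, y.2.1, y.2.2, b)

/-- `Tr_{A₀A₁}` of a matrix on `A₀ × A₁ × B₀ × B₁`. -/
def trA0A1 (J : Matrix (A₀ × A₁ × B₀ × B₁) (A₀ × A₁ × B₀ × B₁) ℂ) :
    Matrix (B₀ × B₁) (B₀ × B₁) ℂ :=
  fun x y => ∑ a₀ : A₀, ∑ a₁ : A₁, J (a₀, a₁, x) (a₀, a₁, y)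

/-- `Tr_{B₀B₁}` of a matrix on `A₀ × A₁ × B₀ × B₁`. -/
def trB0B1 (J : Matrix (A₀ × A₁ × B₀ × B₁) (A₀ × A₁ × B₀ × B₁) ℂ) :
    Matrix (A₀ × A₁) (A₀ × A₁) ℂ :=
  fun x y => ∑ b₀ : B₀, ∑ b₁ : B₁, J (x.1, x.2, b₀, b₁) (y.1, y.2, b₀, b₁)

/-- `Tr_{A₁B₁}` of a matrix on `A₀ × A₁ × B₀ × B₁`. -/
def trA1B1 (J : Matrix (A₀ × A₁ × B₀ × B₁) (A₀ × A₁ × B₀ × B₁) ℂ) :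
    Matrix (A₀ × B₀) (A₀ × B₀) ℂ :=
  fun x y => ∑ a₁ : A₁, ∑ b₁ : B₁, J (x.1, a₁, x.2, b₁) (y.1, a₁, y.2, b₁)

/-- `π_{B₀} ⊗ Y`, reindexed to `A₀ × A₁ × B₀` with the subsystems in this order. -/
def piB0 (Y : Matrix (A₀ × A₁) (A₀ × A₁) ℂ) :
    Matrix (A₀ × A₁ × B₀) (A₀ × A₁ × B₀) ℂ :=
  fun x y => ((Fintype.card B₀ : ℂ))⁻¹ * (if x.2.2 = y.2.2 then 1 else 0) *
    Y (x.1, x.2.1) (y.1, y.2.1)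

/-- The non-signalling conditions for a Choi matrix on `A₀ × A₁ × B₀ × B₁`:
`Tr_{A₁} J = π_{A₀} ⊗ Tr_{A₀A₁} J` and `Tr_{B₁} J = π_{B₀} ⊗ Tr_{B₀B₁} J`. -/
def NS (J : Matrix (A₀ × A₁ × B₀ × B₁) (A₀ × A₁ × B₀ × B₁) ℂ) : Prop :=
  trA1 J = piFst (trA0A1 J) ∧ trB1 J = piB0 (trB0B1 J)

/-- The optimal value `Λ(J)` of the SDP whose logarithm is the max-relative entropy of
bidirectional classical communication of the bipartite channel with Choi matrix `J`. -/
def Lam (J : Matrix (A₀ × A₁ × B₀ × B₁) (A₀ × A₁ × B₀ × B₁) ℂ) : ℝ :=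
  sInf {l : ℝ | ∃ Y : Matrix (A₀ × A₁ × B₀ × B₁) (A₀ × A₁ × B₀ × B₁) ℂ,
    LoewnerLE J Y ∧ trA1B1 Y = l • (1 : Matrix (A₀ × B₀) (A₀ × B₀) ℂ) ∧ NS Y}

end FourSystems

/-- `N ⊗ I_T` reindexed to `S × T`. -/
def tensIdSnd {S T : Type*} [DecidableEq T] (N : Matrix S S ℂ) :
    Matrix (S × T) (S × T) ℂ :=
  fun u v => N u.1 v.1 * (if u.2 = v.2 then 1 else 0)

/-!
For the pairing `Tr (A * B)`, `trInp` and `trOut` are adjoint to `I ⊗ ·` and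
`· ⊗ I`. Pairing `K ≤ I ⊗ X` with `M ≥ 0` and `Tr_{A₀} M ≤ N ⊗ I` with `X ≥ 0` gives
`Tr (M K) ≤ Tr ((Tr_{A₀} M) X) ≤ Tr (N (Tr_{B₁} X))`, and the last term is `m` by the trace
constraints. Here `X ≥ 0` because it is a diagonal block of `I ⊗ X ≥ K ≥ 0`.
-/

open scoped MatrixOrder in
theorem trace_mul_nonneg_of_posSemidef {n 𝕜 : Type*} [Fintype n] [RCLike 𝕜]
    {A B : Matrix n n 𝕜} (hA : A.PosSemidef) (hB : B.PosSemidef) : 0 ≤ trace (A * B) := by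
  classical
  obtain ⟨C, rfl⟩ := CStarAlgebra.nonneg_iff_eq_star_mul_self.mp hA.nonneg
  rw [Matrix.mul_assoc, trace_mul_comm]
  exact (hB.mul_mul_conjTranspose_same C).trace_nonneg

namespace LoewnerLE

variable {n : Type*} [Fintype n] {A B C : Matrix n n ℂ}

theorem posSemidef (hAB : LoewnerLE A B) (hA : A.PosSemidef) : B.PosSemidef := by
  simpa using PosSemidef.add hAB hA

theorem trace_mul_le_trace_mul_left (hAB : LoewnerLE A B) (hC : C.PosSemidef) :
    trace (C * A) ≤ trace (C * B) := by
  rw [← sub_nonneg, ← trace_sub, ← Matrix.mul_sub]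
  exact trace_mul_nonneg_of_posSemidef hC hAB

theorem trace_mul_le_trace_mul_right (hAB : LoewnerLE A B) (hC : C.PosSemidef) :
    trace (A * C) ≤ trace (B * C) := by
  simpa only [trace_mul_comm _ C] using hAB.trace_mul_le_trace_mul_left hC

end LoewnerLE

theorem posSemidef_of_posSemidef_idFst {S T : Type*} [DecidableEq S] [Nonempty S]
    {X : Matrix T T ℂ} (hX : (idFst X : Matrix (S × T) (S × T) ℂ).PosSemidef) :
    X.PosSemidef := by
  obtain ⟨s⟩ := ‹Nonempty S›
  have diagonal_block : (idFst X).submatrix (Prod.mk s) (Prod.mk s) = X := by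
    ext
    simp [idFst]
  exact diagonal_block ▸ hX.submatrix (Prod.mk s)

section PartialTrace

variable {S T : Type*} [Fintype S] [Fintype T]

theorem trace_mul_idFst [DecidableEq S] (M : Matrix (S × T) (S × T) ℂ) (X : Matrix T T ℂ) :
    trace (M * idFst X) = trace (trInp M * X) :=
  calc trace (M * idFst X) = ∑ t, ∑ s, ∑ t', M (s, t) (s, t') * X t' t := by
        simp [trace, mul_apply, idFst, Fintype.sum_prod_type_right]
    _ = ∑ t, ∑ t', ∑ s, M (s, t) (s, t') * X t' t :=
        Finset.sum_congr rfl fun _ _ => Finset.sum_comm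
    _ = trace (trInp M * X) := by
        simp [trace, mul_apply, trInp, Finset.sum_mul]

theorem trace_tensIdSnd_mul [DecidableEq T] (N : Matrix S S ℂ)
    (X : Matrix (S × T) (S × T) ℂ) :
    trace (tensIdSnd N * X) = trace (N * trOut X) :=
  calc trace (tensIdSnd N * X) = ∑ s, ∑ t, ∑ s', N s s' * X (s', t) (s, t) := by
        simp [trace, mul_apply, tensIdSnd, Fintype.sum_prod_type]
    _ = ∑ s, ∑ s', ∑ t, N s s' * X (s', t) (s, t) :=
        Finset.sum_congr rfl fun _ _ => Finset.sum_comm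
    _ = trace (N * trOut X) := by
        simp [trace, mul_apply, trOut, Finset.mul_sum]

end PartialTrace

theorem weak_duality_min_entropy_general {A₀ B₀ B₁ : Type*} [Fintype A₀] [Fintype B₀]
    [Fintype B₁] [DecidableEq A₀] [DecidableEq B₁]
    {K M : Matrix (A₀ × B₀ × B₁) (A₀ × B₀ × B₁) ℂ} {X : Matrix (B₀ × B₁) (B₀ × B₁) ℂ}
    {N : Matrix B₀ B₀ ℂ} (hX : X.PosSemidef) (hKX : LoewnerLE K (idFst X))
    (hM : M.PosSemidef) (hMN : LoewnerLE (trInp M) (tensIdSnd N)) :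
    trace (M * K) ≤ trace (N * trOut X) :=
  calc trace (M * K) ≤ trace (M * idFst X) := hKX.trace_mul_le_trace_mul_left hM
    _ = trace (trInp M * X) := trace_mul_idFst M X
    _ ≤ trace (tensIdSnd N * X) := hMN.trace_mul_le_trace_mul_right hX
    _ = trace (N * trOut X) := trace_tensIdSnd_mul N X

/-- Weak duality for the SDP of the bipartite conditional min-entropy: any primal
feasible `(m, X)` and dual feasible `(M, N)` satisfy `Re Tr(M K) ≤ m`. -/
theorem weak_duality_min_entropy
    {A₀ B₀ B₁ : Type*}
    [Fintype A₀] [Fintype B₀] [Fintype B₁]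
    [DecidableEq A₀] [DecidableEq B₀] [DecidableEq B₁]
    [Nonempty A₀] [Nonempty B₀] [Nonempty B₁]
    (K : Matrix (A₀ × B₀ × B₁) (A₀ × B₀ × B₁) ℂ) (hK : K.PosSemidef)
    (m : ℝ) (X : Matrix (B₀ × B₁) (B₀ × B₁) ℂ)
    (hX₁ : trOut X = m • (1 : Matrix B₀ B₀ ℂ))
    (hX₂ : LoewnerLE K (idFst X))
    (M : Matrix (A₀ × B₀ × B₁) (A₀ × B₀ × B₁) ℂ)
    (N : Matrix B₀ B₀ ℂ)
    (hM : M.PosSemidef)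
    (hN₁ : N.IsHermitian) (hN₂ : Matrix.trace N = 1)
    (hdual : LoewnerLE (trInp M) (tensIdSnd N)) :
    (Matrix.trace (M * K)).re ≤ m := by
  have hX : X.PosSemidef := posSemidef_of_posSemidef_idFst (hX₂.posSemidef hK)
  simpa [hX₁, hN₂] using Complex.re_le_re (weak_duality_min_entropy_general hX hX₂ hM hdual)
end
end

section
/- Any non-signalling bipartite superchannel applied to the noiseless bidirectional classical channel Υ_m yields a channel whose max-relative entropy of bidirectional classical communication is at most log m: let m ≥ 2, let Ā₀ = Ā₁ = B̄₀ = B̄₁ = Fin m, let A₀, A₁, B₀, B₁ be finite nonempty types, and let J^Θ, indexed by A₀ × Ā₀ × Ā₁ × A₁ × B₀ × B̄₀ × B̄₁ × B₁, satisfy the Choi-matrix conditions of a non-signalling bipartite superchannel: J^Θ positive semidefinite; Tr_{Ā₀ A₁ B̄₀ B₁} J^Θ = I_{A₀ Ā₁ B₀ B̄₁}; Tr_{Ā₀ A₁} J^Θ = π_{A₀} ⊗ Tr_{A₀ Ā₀ A₁} J^Θ; Tr_{A₁} J^Θ = π_{Ā₁} ⊗ Tr_{Ā₁ A₁} J^Θ;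 Tr_{B̄₀ B₁} J^Θ = π_{B₀} ⊗ Tr_{B₀ B̄₀ B₁} J^Θ; Tr_{B₁} J^Θ = π_{B̄₁} ⊗ Tr_{B̄₁ B₁} J^Θ. Let C = C_{Ā₀B̄₁} ⊠ C_{B̄₀Ā₁} (indexed by Ā₀ × Ā₁ × B̄₀ × B̄₁, with C_{ST} = ∑_k E_{kk} ⊗ E_{kk}) be the Choi matrix of Υ_m, and let J^out, indexed by A₀ × A₁ × B₀ × B₁, be the link product J^out(x, x') = ∑_{ȳ, ȳ'} J^Θ(ι(x, ȳ), ι(x', ȳ')) · C(ȳ', ȳ), where ι interleaves indices into the order A₀, Ā₀, Ā₁, A₁, B₀, B̄₀, B̄₁, B₁. Then Λ(J^out) ≤ m. -/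
open Matrix
open scoped ComplexOrder

noncomputable section

/-- `C_{ST} = ∑ k, E_{kk} ⊗ E_{kk}`, the Choi matrix of the noiseless classical channel
on `m` messages (indexed by `Fin m × Fin m`). -/
def classChoi (m : ℕ) : Matrix (Fin m × Fin m) (Fin m × Fin m) ℂ :=
  fun x y => if x.1 = x.2 ∧ y.1 = y.2 ∧ x.1 = y.1 then 1 else 0

/-- `C = C_{A₀B₁} ⊠ C_{B₀A₁}`, the Choi matrix of the noiseless bidirectional classical
channel `Υ_m`, indexed by `A₀ × A₁ × B₀ × B₁` (all equal to `Fin m`). -/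
def upsChoi (m : ℕ) : Matrix (Fin m × Fin m × Fin m × Fin m) (Fin m × Fin m × Fin m × Fin m) ℂ :=
  fun x y =>
    classChoi m (x.1, x.2.2.2) (y.1, y.2.2.2) * classChoi m (x.2.2.1, x.2.1) (y.2.2.1, y.2.1)

/-- `J′ = (1/m) • (C_{A₀B₁} ⊠ C_{B₀A₁})
      + (1/(m(m−1))) • ((I − C)_{A₀B₁} ⊠ (I − C)_{B₀A₁})`,
indexed by `A₀ × A₁ × B₀ × B₁` (all equal to `Fin m`). -/
def Jprime (m : ℕ) : Matrix (Fin m × Fin m × Fin m × Fin m) (Fin m × Fin m × Fin m × Fin m) ℂ :=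
  fun x y =>
    (m : ℂ)⁻¹ *
      (classChoi m (x.1, x.2.2.2) (y.1, y.2.2.2) *
        classChoi m (x.2.2.1, x.2.1) (y.2.2.1, y.2.1)) +
    ((m : ℂ) * ((m : ℂ) - 1))⁻¹ *
      ((1 - classChoi m) (x.1, x.2.2.2) (y.1, y.2.2.2) *
        (1 - classChoi m) (x.2.2.1, x.2.1) (y.2.2.1, y.2.1))

section Superchannel

variable {A0 Ab0 Ab1 A1 B0 Bb0 Bb1 B1 : Type*}
  [Fintype A0] [Fintype Ab0] [Fintype Ab1] [Fintype A1]
  [Fintype B0] [Fintype Bb0] [Fintype Bb1] [Fintype B1]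
  [DecidableEq A0] [DecidableEq Ab0] [DecidableEq Ab1] [DecidableEq A1]
  [DecidableEq B0] [DecidableEq Bb0] [DecidableEq Bb1] [DecidableEq B1]

/-- `Tr_{Ā₀ A₁ B̄₀ B₁} J^Θ`, indexed by `A₀ × Ā₁ × B₀ × B̄₁`. -/
def scTP (J : Matrix (A0 × Ab0 × Ab1 × A1 × B0 × Bb0 × Bb1 × B1)
      (A0 × Ab0 × Ab1 × A1 × B0 × Bb0 × Bb1 × B1) ℂ) :
    Matrix (A0 × Ab1 × B0 × Bb1) (A0 × Ab1 × B0 × Bb1) ℂ :=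
  fun x y => ∑ ab0 : Ab0, ∑ a1 : A1, ∑ bb0 : Bb0, ∑ b1 : B1,
    J (x.1, ab0, x.2.1, a1, x.2.2.1, bb0, x.2.2.2, b1)
      (y.1, ab0, y.2.1, a1, y.2.2.1, bb0, y.2.2.2, b1)

/-- `Tr_{Ā₀ A₁} J^Θ`, indexed by `A₀ × Ā₁ × B₀ × B̄₀ × B̄₁ × B₁`. -/
def scTrAb0A1 (J : Matrix (A0 × Ab0 × Ab1 × A1 × B0 × Bb0 × Bb1 × B1)
      (A0 × Ab0 × Ab1 × A1 × B0 × Bb0 × Bb1 × B1) ℂ) :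
    Matrix (A0 × Ab1 × B0 × Bb0 × Bb1 × B1) (A0 × Ab1 × B0 × Bb0 × Bb1 × B1) ℂ :=
  fun x y => ∑ ab0 : Ab0, ∑ a1 : A1,
    J (x.1, ab0, x.2.1, a1, x.2.2) (y.1, ab0, y.2.1, a1, y.2.2)

/-- `Tr_{A₀ Ā₀ A₁} J^Θ`, indexed by `Ā₁ × B₀ × B̄₀ × B̄₁ × B₁`. -/
def scTrA0Ab0A1 (J : Matrix (A0 × Ab0 × Ab1 × A1 × B0 × Bb0 × Bb1 × B1)
      (A0 × Ab0 × Ab1 × A1 × B0 × Bb0 × Bb1 × B1) ℂ) :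
    Matrix (Ab1 × B0 × Bb0 × Bb1 × B1) (Ab1 × B0 × Bb0 × Bb1 × B1) ℂ :=
  fun x y => ∑ a0 : A0, ∑ ab0 : Ab0, ∑ a1 : A1,
    J (a0, ab0, x.1, a1, x.2) (a0, ab0, y.1, a1, y.2)

/-- `Tr_{A₁} J^Θ`, indexed by `A₀ × Ā₀ × Ā₁ × B₀ × B̄₀ × B̄₁ × B₁`. -/
def scTrA1 (J : Matrix (A0 × Ab0 × Ab1 × A1 × B0 × Bb0 × Bb1 × B1)
      (A0 × Ab0 × Ab1 × A1 × B0 × Bb0 × Bb1 × B1) ℂ) :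
    Matrix (A0 × Ab0 × Ab1 × B0 × Bb0 × Bb1 × B1)
      (A0 × Ab0 × Ab1 × B0 × Bb0 × Bb1 × B1) ℂ :=
  fun x y => ∑ a1 : A1,
    J (x.1, x.2.1, x.2.2.1, a1, x.2.2.2) (y.1, y.2.1, y.2.2.1, a1, y.2.2.2)

/-- `Tr_{Ā₁ A₁} J^Θ`, indexed by `A₀ × Ā₀ × B₀ × B̄₀ × B̄₁ × B₁`. -/
def scTrAb1A1 (J : Matrix (A0 × Ab0 × Ab1 × A1 × B0 × Bb0 × Bb1 × B1)
      (A0 × Ab0 × Ab1 × A1 × B0 × Bb0 × Bb1 × B1) ℂ) :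
    Matrix (A0 × Ab0 × B0 × Bb0 × Bb1 × B1) (A0 × Ab0 × B0 × Bb0 × Bb1 × B1) ℂ :=
  fun x y => ∑ ab1 : Ab1, ∑ a1 : A1,
    J (x.1, x.2.1, ab1, a1, x.2.2) (y.1, y.2.1, ab1, a1, y.2.2)

/-- `π_{Ā₁} ⊗ Y` with `π_{Ā₁}` inserted in the third slot of
`A₀ × Ā₀ × Ā₁ × B₀ × B̄₀ × B̄₁ × B₁`. -/
def piAb1 (Y : Matrix (A0 × Ab0 × B0 × Bb0 × Bb1 × B1) (A0 × Ab0 × B0 × Bb0 × Bb1 × B1) ℂ) :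
    Matrix (A0 × Ab0 × Ab1 × B0 × Bb0 × Bb1 × B1)
      (A0 × Ab0 × Ab1 × B0 × Bb0 × Bb1 × B1) ℂ :=
  fun x y => ((Fintype.card Ab1 : ℂ))⁻¹ * (if x.2.2.1 = y.2.2.1 then 1 else 0) *
    Y (x.1, x.2.1, x.2.2.2) (y.1, y.2.1, y.2.2.2)

/-- `Tr_{B̄₀ B₁} J^Θ`, indexed by `A₀ × Ā₀ × Ā₁ × A₁ × B₀ × B̄₁`. -/
def scTrBb0B1 (J : Matrix (A0 × Ab0 × Ab1 × A1 × B0 × Bb0 × Bb1 × B1)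
      (A0 × Ab0 × Ab1 × A1 × B0 × Bb0 × Bb1 × B1) ℂ) :
    Matrix (A0 × Ab0 × Ab1 × A1 × B0 × Bb1) (A0 × Ab0 × Ab1 × A1 × B0 × Bb1) ℂ :=
  fun x y => ∑ bb0 : Bb0, ∑ b1 : B1,
    J (x.1, x.2.1, x.2.2.1, x.2.2.2.1, x.2.2.2.2.1, bb0, x.2.2.2.2.2, b1)
      (y.1, y.2.1, y.2.2.1, y.2.2.2.1, y.2.2.2.2.1, bb0, y.2.2.2.2.2, b1)

/-- `Tr_{B₀ B̄₀ B₁} J^Θ`, indexed by `A₀ × Ā₀ × Ā₁ × A₁ × B̄₁`. -/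
def scTrB0Bb0B1 (J : Matrix (A0 × Ab0 × Ab1 × A1 × B0 × Bb0 × Bb1 × B1)
      (A0 × Ab0 × Ab1 × A1 × B0 × Bb0 × Bb1 × B1) ℂ) :
    Matrix (A0 × Ab0 × Ab1 × A1 × Bb1) (A0 × Ab0 × Ab1 × A1 × Bb1) ℂ :=
  fun x y => ∑ b0 : B0, ∑ bb0 : Bb0, ∑ b1 : B1,
    J (x.1, x.2.1, x.2.2.1, x.2.2.2.1, b0, bb0, x.2.2.2.2, b1)
      (y.1, y.2.1, y.2.2.1, y.2.2.2.1, b0, bb0, y.2.2.2.2, b1)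

/-- `π_{B₀} ⊗ Y` with `π_{B₀}` inserted in the fifth slot of
`A₀ × Ā₀ × Ā₁ × A₁ × B₀ × B̄₁`. -/
def piB0sc (Y : Matrix (A0 × Ab0 × Ab1 × A1 × Bb1) (A0 × Ab0 × Ab1 × A1 × Bb1) ℂ) :
    Matrix (A0 × Ab0 × Ab1 × A1 × B0 × Bb1) (A0 × Ab0 × Ab1 × A1 × B0 × Bb1) ℂ :=
  fun x y => ((Fintype.card B0 : ℂ))⁻¹ * (if x.2.2.2.2.1 = y.2.2.2.2.1 then 1 else 0) *
    Y (x.1, x.2.1, x.2.2.1, x.2.2.2.1, x.2.2.2.2.2) (y.1, y.2.1, y.2.2.1, y.2.2.2.1, y.2.2.2.2.2)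

/-- `Tr_{B₁} J^Θ`, indexed by `A₀ × Ā₀ × Ā₁ × A₁ × B₀ × B̄₀ × B̄₁`. -/
def scTrB1 (J : Matrix (A0 × Ab0 × Ab1 × A1 × B0 × Bb0 × Bb1 × B1)
      (A0 × Ab0 × Ab1 × A1 × B0 × Bb0 × Bb1 × B1) ℂ) :
    Matrix (A0 × Ab0 × Ab1 × A1 × B0 × Bb0 × Bb1)
      (A0 × Ab0 × Ab1 × A1 × B0 × Bb0 × Bb1) ℂ :=
  fun x y => ∑ b1 : B1,
    J (x.1, x.2.1, x.2.2.1, x.2.2.2.1, x.2.2.2.2.1, x.2.2.2.2.2.1, x.2.2.2.2.2.2, b1)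
      (y.1, y.2.1, y.2.2.1, y.2.2.2.1, y.2.2.2.2.1, y.2.2.2.2.2.1, y.2.2.2.2.2.2, b1)

/-- `Tr_{B̄₁ B₁} J^Θ`, indexed by `A₀ × Ā₀ × Ā₁ × A₁ × B₀ × B̄₀`. -/
def scTrBb1B1 (J : Matrix (A0 × Ab0 × Ab1 × A1 × B0 × Bb0 × Bb1 × B1)
      (A0 × Ab0 × Ab1 × A1 × B0 × Bb0 × Bb1 × B1) ℂ) :
    Matrix (A0 × Ab0 × Ab1 × A1 × B0 × Bb0) (A0 × Ab0 × Ab1 × A1 × B0 × Bb0) ℂ :=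
  fun x y => ∑ bb1 : Bb1, ∑ b1 : B1,
    J (x.1, x.2.1, x.2.2.1, x.2.2.2.1, x.2.2.2.2.1, x.2.2.2.2.2, bb1, b1)
      (y.1, y.2.1, y.2.2.1, y.2.2.2.1, y.2.2.2.2.1, y.2.2.2.2.2, bb1, b1)

/-- `π_{B̄₁} ⊗ Y` with `π_{B̄₁}` inserted in the seventh slot of
`A₀ × Ā₀ × Ā₁ × A₁ × B₀ × B̄₀ × B̄₁`. -/
def piBb1sc (Y : Matrix (A0 × Ab0 × Ab1 × A1 × B0 × Bb0) (A0 × Ab0 × Ab1 × A1 × B0 × Bb0) ℂ) :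
    Matrix (A0 × Ab0 × Ab1 × A1 × B0 × Bb0 × Bb1)
      (A0 × Ab0 × Ab1 × A1 × B0 × Bb0 × Bb1) ℂ :=
  fun x y => ((Fintype.card Bb1 : ℂ))⁻¹ * (if x.2.2.2.2.2.2 = y.2.2.2.2.2.2 then 1 else 0) *
    Y (x.1, x.2.1, x.2.2.1, x.2.2.2.1, x.2.2.2.2.1, x.2.2.2.2.2.1)
      (y.1, y.2.1, y.2.2.1, y.2.2.2.1, y.2.2.2.2.1, y.2.2.2.2.2.1)

/-- The link product `J^out(x, x') = ∑_{ȳ, ȳ'} J^Θ(ι(x,ȳ), ι(x',ȳ')) · J^N(ȳ', ȳ)`,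
the Choi matrix of the channel obtained by applying the superchannel with Choi matrix
`J^Θ` to the channel with Choi matrix `J^N`. -/
def linkOut (JΘ : Matrix (A0 × Ab0 × Ab1 × A1 × B0 × Bb0 × Bb1 × B1)
      (A0 × Ab0 × Ab1 × A1 × B0 × Bb0 × Bb1 × B1) ℂ)
    (JN : Matrix (Ab0 × Ab1 × Bb0 × Bb1) (Ab0 × Ab1 × Bb0 × Bb1) ℂ) :
    Matrix (A0 × A1 × B0 × B1) (A0 × A1 × B0 × B1) ℂ :=
  fun x y => ∑ z : Ab0 × Ab1 × Bb0 × Bb1, ∑ w : Ab0 × Ab1 × Bb0 × Bb1,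
    JΘ (x.1, z.1, z.2.1, x.2.1, x.2.2.1, z.2.2.1, z.2.2.2, x.2.2.2)
       (y.1, w.1, w.2.1, y.2.1, y.2.2.1, w.2.2.1, w.2.2.2, y.2.2.2) * JN w z

end Superchannel

/-!
Applying a non-signalling superchannel cannot increase `Λ`: the link product with `J^Θ` maps a
feasible point of the semidefinite program for `J^N` to one for `J^out` with the same value. It
preserves positivity by the Schur product theorem. The other two constraints are preserved because
every entry of `J^out` is a trace pairing of a block of `J^Θ` with `J^N`, and `X ↦ π ⊗ X` is, up to
normalization, adjoint to the partial trace, so a factor `π` in `J^Θ` traces out `J^N` and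
conversely. The condition on Bob's side follows from the one on Alice's by exchanging the parties.

It remains to see that `Λ(Υ_m) ≤ m`, and `m • J′` is a feasible point of value `m`: it exceeds the
Choi matrix of `Υ_m` by `(m - 1)⁻¹ • (I - C) ⊠ (I - C)`, where `C = classChoi m` is a projection,
and its partial trace over either party's output is the identity.
-/

section PartialTrace

variable {n S T : Type*} [Fintype S] [DecidableEq S]

lemma eq_piFst_trInp_of_eq_idFst [Nonempty S] {M : Matrix (S × T) (S × T) ℂ}
    {G : Matrix T T ℂ} (h : M = idFst G) : M = piFst (trInp M) := by
  have htr (t t' : T) : trInp M t t' = Fintype.card S * G t t' := by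
    simp [h, trInp, idFst]
  ext x y
  simp only [piFst, htr]
  simp only [h, idFst]
  field_simp

lemma trace_piFst_mul [Fintype T] (X : Matrix T T ℂ) (Y : Matrix (S × T) (S × T) ℂ) :
    (piFst X * Y).trace = (Fintype.card S : ℂ)⁻¹ * (X * trInp Y).trace := by
  simp only [trace, diag_apply, mul_apply, piFst, trInp, Fintype.sum_prod_type, mul_ite, mul_one,
    mul_zero, ite_mul, zero_mul, Finset.sum_ite_irrel, Finset.sum_const_zero, Finset.sum_ite_eq,
    Finset.mem_univ, if_true, Finset.mul_sum, mul_assoc]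
  rw [Finset.sum_comm]
  exact Finset.sum_congr rfl fun t _ => Finset.sum_comm

lemma trace_submatrix_piFst_mul [Fintype n] [Fintype T] (e : n ≃ S × T) (X : Matrix T T ℂ)
    (Y : Matrix n n ℂ) :
    ((piFst X).submatrix e e * Y).trace =
      (Fintype.card S : ℂ)⁻¹ * (X * trInp (Y.submatrix e.symm e.symm)).trace := by
  rw [← trace_piFst_mul]
  simp [trace, mul_apply, ← e.symm.sum_comp]

end PartialTrace

lemma posSemidef_sum_snd {R X Z : Type*} [CommRing R] [PartialOrder R] [StarRing R] [Finite X]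
    [Fintype Z] {K : Matrix (X × Z) (X × Z) R} (hK : K.PosSemidef) :
    (Matrix.of fun x y => ∑ z, ∑ w, K (x, z) (y, w)).PosSemidef := by
  classical
  have := Fintype.ofFinite X
  let V : Matrix (X × Z) X R := Matrix.of fun p x => if x = p.1 then 1 else 0
  have hV : (Matrix.of fun x y => ∑ z, ∑ w, K (x, z) (y, w)) = Vᴴ * K * V := by
    ext x y
    rw [mul_apply, Fintype.sum_prod_type_right]
    simpa [V, mul_apply, Fintype.sum_prod_type_right, apply_ite] using Finset.sum_comm
  exact hV ▸ hK.conjTranspose_mul_mul_same V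

/-- Choi matrices of bipartite channels `A₀B₀ → A₁B₁`. -/
abbrev ChannelChoi (A₀ A₁ B₀ B₁ : Type*) :=
  Matrix (A₀ × A₁ × B₀ × B₁) (A₀ × A₁ × B₀ × B₁) ℂ

/-- Choi matrices of bipartite superchannels, which turn a channel `Ā₀B̄₀ → Ā₁B̄₁` into a channel
`A₀B₀ → A₁B₁`. -/
abbrev SuperchannelChoi (A₀ Ab₀ Ab₁ A₁ B₀ Bb₀ Bb₁ B₁ : Type*) :=
  Matrix (A₀ × Ab₀ × Ab₁ × A₁ × B₀ × Bb₀ × Bb₁ × B₁) (A₀ × Ab₀ × Ab₁ × A₁ × B₀ × Bb₀ × Bb₁ × B₁) ℂ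

section LinkProduct

variable {A₀ Ab₀ Ab₁ A₁ B₀ Bb₀ Bb₁ B₁ : Type*}

/-- The map `ι` interleaving the outer indices `x` and the inner indices `z`. -/
def interleave (x : A₀ × A₁ × B₀ × B₁) (z : Ab₀ × Ab₁ × Bb₀ × Bb₁) :
    A₀ × Ab₀ × Ab₁ × A₁ × B₀ × Bb₀ × Bb₁ × B₁ :=
  (x.1, z.1, z.2.1, x.2.1, x.2.2.1, z.2.2.1, z.2.2.2, x.2.2.2)

/-- `ι` restricted to the outer inputs `x` and either the inner inputs or the inner outputs. -/
def interleavePair {Ab Bb : Type*} (x : A₀ × B₀) (p : Ab × Bb) : A₀ × Ab × B₀ × Bb :=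
  (x.1, p.1, x.2, p.2)

/-- Moves the systems `Ā₁` and `B̄₁` of `Ā₀ × Ā₁ × B̄₀ × B̄₁` to the front. -/
def outABEquiv : Ab₀ × Ab₁ × Bb₀ × Bb₁ ≃ (Ab₁ × Bb₁) × Ab₀ × Bb₀ where
  toFun z := ((z.2.1, z.2.2.2), z.1, z.2.2.1)
  invFun w := (w.2.1, w.1.1, w.2.2, w.1.2)

/-- `Tr_{Ā₁ A₁ B̄₁ B₁} J^Θ`, indexed by `A₀ × Ā₀ × B₀ × B̄₀`. -/
def scTrOut [Fintype Ab₁] [Fintype A₁] [Fintype Bb₁] [Fintype B₁]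
    (JΘ : SuperchannelChoi A₀ Ab₀ Ab₁ A₁ B₀ Bb₀ Bb₁ B₁) :
    Matrix (A₀ × Ab₀ × B₀ × Bb₀) (A₀ × Ab₀ × B₀ × Bb₀) ℂ :=
  fun x y => ∑ bb₁, ∑ b₁, scTrAb1A1 JΘ (x.1, x.2.1, x.2.2.1, x.2.2.2, bb₁, b₁)
    (y.1, y.2.1, y.2.2.1, y.2.2.2, bb₁, b₁)

lemma sum_submatrix_interleave_eq_piFst [Fintype Ab₁] [Fintype A₁] [Fintype Bb₁] [Fintype B₁]
    [DecidableEq Ab₁] [DecidableEq Bb₁] {JΘ : SuperchannelChoi A₀ Ab₀ Ab₁ A₁ B₀ Bb₀ Bb₁ B₁}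
    (hΘA : scTrA1 JΘ = piAb1 (scTrAb1A1 JΘ)) (hΘB : scTrB1 JΘ = piBb1sc (scTrBb1B1 JΘ))
    (x y : A₀ × B₀) :
    ∑ a₁, ∑ b₁, JΘ.submatrix (interleave (x.1, a₁, x.2, b₁)) (interleave (y.1, a₁, y.2, b₁)) =
      (piFst ((scTrOut JΘ).submatrix (interleavePair x) (interleavePair y))).submatrix
        outABEquiv outABEquiv := by
  ext ⟨z₁, z₂, z₃, z₄⟩ ⟨w₁, w₂, w₃, w₄⟩
  simp only [Matrix.sum_apply]
  calc ∑ a₁, ∑ b₁, JΘ (x.1, z₁, z₂, a₁, x.2, z₃, z₄, b₁) (y.1, w₁, w₂, a₁, y.2, w₃, w₄, b₁)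
      = ∑ a₁, (Fintype.card Bb₁ : ℂ)⁻¹ * (if z₄ = w₄ then 1 else 0) *
          scTrBb1B1 JΘ (x.1, z₁, z₂, a₁, x.2, z₃) (y.1, w₁, w₂, a₁, y.2, w₃) :=
        Finset.sum_congr rfl fun a₁ _ => congrFun₂ hΘB (x.1, z₁, z₂, a₁, x.2, z₃, z₄)
          (y.1, w₁, w₂, a₁, y.2, w₃, w₄)
    _ = (Fintype.card Bb₁ : ℂ)⁻¹ * (if z₄ = w₄ then 1 else 0) * ∑ bb₁, ∑ b₁,
          scTrA1 JΘ (x.1, z₁, z₂, x.2, z₃, bb₁, b₁) (y.1, w₁, w₂, y.2, w₃, bb₁, b₁) := by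
        rw [← Finset.mul_sum]
        congr 1
        simp only [scTrBb1B1, scTrA1]
        rw [Finset.sum_comm]
        exact Finset.sum_congr rfl fun bb₁ _ => Finset.sum_comm
    _ = (Fintype.card Bb₁ : ℂ)⁻¹ * (if z₄ = w₄ then 1 else 0) * ((Fintype.card Ab₁ : ℂ)⁻¹ *
          (if z₂ = w₂ then 1 else 0) * scTrOut JΘ (x.1, z₁, x.2, z₃) (y.1, w₁, y.2, w₃)) := by
        simp only [hΘA, piAb1, scTrOut, Finset.mul_sum]
    _ = _ := by
        simp only [submatrix_apply, piFst, outABEquiv, interleavePair, Equiv.coe_fn_mk,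
          Prod.mk.injEq, Fintype.card_prod, Nat.cast_mul, mul_inv, ite_and]
        split_ifs <;> ring

variable [Fintype Ab₀] [Fintype Ab₁] [Fintype Bb₀] [Fintype Bb₁]
  {JΘ : SuperchannelChoi A₀ Ab₀ Ab₁ A₁ B₀ Bb₀ Bb₁ B₁} {JN JN' : ChannelChoi Ab₀ Ab₁ Bb₀ Bb₁}

lemma linkOut_apply (JΘ : SuperchannelChoi A₀ Ab₀ Ab₁ A₁ B₀ Bb₀ Bb₁ B₁)
    (JN : ChannelChoi Ab₀ Ab₁ Bb₀ Bb₁) (x y : A₀ × A₁ × B₀ × B₁) :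
    linkOut JΘ JN x y = (JΘ.submatrix (interleave x) (interleave y) * JN).trace :=
  rfl

lemma linkOut_sub : linkOut JΘ (JN - JN') = linkOut JΘ JN - linkOut JΘ JN' := by
  ext x y
  simp only [linkOut_apply, Matrix.sub_apply, mul_sub, trace_sub]

lemma posSemidef_linkOut [Finite A₀] [Finite A₁] [Finite B₀] [Finite B₁]
    (hΘ : JΘ.PosSemidef) (hN : JN.PosSemidef) : (linkOut JΘ JN).PosSemidef := by
  let ι (p : (A₀ × A₁ × B₀ × B₁) × Ab₀ × Ab₁ × Bb₀ × Bb₁) := interleave p.1 p.2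
  let inner (p : (A₀ × A₁ × B₀ × B₁) × Ab₀ × Ab₁ × Bb₀ × Bb₁) := p.2
  have hblocks : (JΘ.submatrix ι ι ⊙ JNᵀ.submatrix inner inner).PosSemidef :=
    PosSemidef.hadamard (hΘ.submatrix ι) (hN.transpose.submatrix inner)
  have hlink : linkOut JΘ JN = Matrix.of fun x y =>
      ∑ z, ∑ w, (JΘ.submatrix ι ι ⊙ JNᵀ.submatrix inner inner) (x, z) (y, w) := rfl
  rw [hlink]
  exact posSemidef_sum_snd hblocks

lemma loewnerLE_linkOut [Fintype A₀] [Fintype A₁] [Fintype B₀] [Fintype B₁]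
    (hΘ : JΘ.PosSemidef) (hN : LoewnerLE JN JN') :
    LoewnerLE (linkOut JΘ JN) (linkOut JΘ JN') := by
  rw [LoewnerLE, ← linkOut_sub]
  exact posSemidef_linkOut hΘ hN

/-- Moves the system `Ā₁` of `Ā₀ × Ā₁ × B̄₀ × B̄₁` to the front. -/
def outAEquiv : Ab₀ × Ab₁ × Bb₀ × Bb₁ ≃ Ab₁ × Ab₀ × Bb₀ × Bb₁ where
  toFun z := (z.2.1, z.1, z.2.2)
  invFun w := (w.2.1, w.1, w.2.2)

/-- `ι` restricted to the systems left after tracing out `Ā₁` and `A₁`. -/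
def interleaveTrA (x : A₀ × B₀ × B₁) (z : Ab₀ × Bb₀ × Bb₁) : A₀ × Ab₀ × B₀ × Bb₀ × Bb₁ × B₁ :=
  (x.1, z.1, x.2.1, z.2.1, z.2.2, x.2.2)

lemma trA1_linkOut [Fintype A₁] [DecidableEq Ab₁] (hΘ : scTrA1 JΘ = piAb1 (scTrAb1A1 JΘ))
    (x y : A₀ × B₀ × B₁) :
    trA1 (linkOut JΘ JN) x y = (Fintype.card Ab₁ : ℂ)⁻¹ *
      ((scTrAb1A1 JΘ).submatrix (interleaveTrA x) (interleaveTrA y) * trA1 JN).trace := by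
  have hblock : ∑ a, JΘ.submatrix (interleave (x.1, a, x.2)) (interleave (y.1, a, y.2)) =
      (piFst ((scTrAb1A1 JΘ).submatrix (interleaveTrA x) (interleaveTrA y))).submatrix
        outAEquiv outAEquiv := by
    ext z w
    rw [Matrix.sum_apply]
    exact congrFun₂ hΘ (x.1, z.1, z.2.1, x.2.1, z.2.2.1, z.2.2.2, x.2.2)
      (y.1, w.1, w.2.1, y.2.1, w.2.2.1, w.2.2.2, y.2.2)
  calc trA1 (linkOut JΘ JN) x y
      = ((∑ a, JΘ.submatrix (interleave (x.1, a, x.2)) (interleave (y.1, a, y.2))) * JN).trace := by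
        simp only [trA1, linkOut_apply, Finset.sum_mul, trace_sum]
    _ = _ := by
        rw [hblock, trace_submatrix_piFst_mul]
        rfl

lemma trA1_linkOut_eq_piFst [Fintype A₀] [Nonempty A₀] [DecidableEq A₀] [Fintype A₁]
    [DecidableEq Ab₀] [DecidableEq Ab₁]
    (hΘin : scTrAb0A1 JΘ = piFst (scTrA0Ab0A1 JΘ)) (hΘout : scTrA1 JΘ = piAb1 (scTrAb1A1 JΘ))
    (hN : trA1 JN = piFst (trA0A1 JN)) :
    trA1 (linkOut JΘ JN) = piFst (trA0A1 (linkOut JΘ JN)) := by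
  let K (u v : B₀ × B₁) : Matrix (Bb₀ × Bb₁) (Bb₀ × Bb₁) ℂ := Matrix.of fun p q =>
    ∑ ab₁, scTrA0Ab0A1 JΘ (ab₁, u.1, p.1, p.2, u.2) (ab₁, v.1, q.1, q.2, v.2)
  have htr (x y : A₀ × B₀ × B₁) :
      trInp ((scTrAb1A1 JΘ).submatrix (interleaveTrA x) (interleaveTrA y)) =
        ((Fintype.card A₀ : ℂ)⁻¹ * if x.1 = y.1 then 1 else 0) • K x.2 y.2 := by
    ext p q
    calc trInp ((scTrAb1A1 JΘ).submatrix (interleaveTrA x) (interleaveTrA y)) p q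
        = ∑ ab₁, scTrAb0A1 JΘ (x.1, ab₁, x.2.1, p.1, p.2, x.2.2)
            (y.1, ab₁, y.2.1, q.1, q.2, y.2.2) := Finset.sum_comm
      _ = _ := by
        simp only [hΘin, piFst, K, Matrix.smul_apply, of_apply, smul_eq_mul, Finset.mul_sum]
  refine eq_piFst_trInp_of_eq_idFst (G := Matrix.of fun u v => (Fintype.card Ab₁ : ℂ)⁻¹ *
    (Fintype.card Ab₀ : ℂ)⁻¹ * (Fintype.card A₀ : ℂ)⁻¹ * (trA0A1 JN * K u v).trace) ?_
  ext x y
  rw [trA1_linkOut hΘout, hN, trace_mul_comm, trace_piFst_mul, htr, Matrix.mul_smul,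
    trace_smul, smul_eq_mul, idFst, of_apply]
  ring

lemma trace_scTrOut [Fintype A₁] [Fintype B₁] (x y : A₀ × B₀) :
    ((scTrOut JΘ).submatrix (interleavePair x) (interleavePair y)).trace =
      ∑ p : Ab₁ × Bb₁, scTP JΘ (interleavePair x p) (interleavePair y p) := by
  let e : Ab₀ × Bb₀ × Bb₁ × B₁ × Ab₁ × A₁ ≃ Ab₁ × Bb₁ × Ab₀ × A₁ × Bb₀ × B₁ :=
    { toFun := fun ⟨ab₀, bb₀, bb₁, b₁, ab₁, a₁⟩ => (ab₁, bb₁, ab₀, a₁, bb₀, b₁)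
      invFun := fun ⟨ab₁, bb₁, ab₀, a₁, bb₀, b₁⟩ => (ab₀, bb₀, bb₁, b₁, ab₁, a₁) }
  have h := e.sum_comp fun ⟨ab₁, bb₁, ab₀, a₁, bb₀, b₁⟩ =>
    JΘ (x.1, ab₀, ab₁, a₁, x.2, bb₀, bb₁, b₁) (y.1, ab₀, ab₁, a₁, y.2, bb₀, bb₁, b₁)
  simp only [Fintype.sum_prod_type] at h
  simp only [trace, Fintype.sum_prod_type]
  exact h

lemma trA1B1_linkOut_eq_smul_one [DecidableEq A₀] [DecidableEq B₀] [Fintype A₁] [Fintype B₁]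
    [DecidableEq Ab₀] [DecidableEq Bb₀] [DecidableEq Ab₁] [DecidableEq Bb₁]
    [Nonempty Ab₁] [Nonempty Bb₁] {l : ℝ}
    (hΘ : scTP JΘ = 1) (hΘA : scTrA1 JΘ = piAb1 (scTrAb1A1 JΘ))
    (hΘB : scTrB1 JΘ = piBb1sc (scTrBb1B1 JΘ))
    (hN : trA1B1 JN = l • (1 : Matrix (Ab₀ × Bb₀) (Ab₀ × Bb₀) ℂ)) :
    trA1B1 (linkOut JΘ JN) = l • (1 : Matrix (A₀ × B₀) (A₀ × B₀) ℂ) := by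
  have hN' : trInp (JN.submatrix outABEquiv.symm outABEquiv.symm) =
      l • (1 : Matrix (Ab₀ × Bb₀) (Ab₀ × Bb₀) ℂ) := by
    rw [← hN]
    ext p q
    exact Fintype.sum_prod_type _
  ext x y
  calc trA1B1 (linkOut JΘ JN) x y
      = ((∑ a₁, ∑ b₁, JΘ.submatrix (interleave (x.1, a₁, x.2, b₁))
          (interleave (y.1, a₁, y.2, b₁))) * JN).trace := by
        simp only [trA1B1, linkOut_apply, Finset.sum_mul, trace_sum]
    _ = (Fintype.card (Ab₁ × Bb₁) : ℂ)⁻¹ * (l • ∑ p : Ab₁ × Bb₁,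
          (1 : Matrix (A₀ × Ab₁ × B₀ × Bb₁) (A₀ × Ab₁ × B₀ × Bb₁) ℂ)
            (interleavePair x p) (interleavePair y p)) := by
        rw [sum_submatrix_interleave_eq_piFst hΘA hΘB, trace_submatrix_piFst_mul, hN',
          Matrix.mul_smul, Matrix.mul_one, trace_smul, trace_scTrOut, hΘ]
    _ = _ := by
        have hone (p : Ab₁ × Bb₁) : (1 : Matrix (A₀ × Ab₁ × B₀ × Bb₁) (A₀ × Ab₁ × B₀ × Bb₁) ℂ)
            (interleavePair x p) (interleavePair y p) =
              (1 : Matrix (A₀ × B₀) (A₀ × B₀) ℂ) x y := by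
          simp only [interleavePair, one_apply, Prod.ext_iff, true_and, and_true]
        simp only [hone, Finset.sum_const, Finset.card_univ, nsmul_eq_mul, Matrix.smul_apply,
          Complex.real_smul]
        field_simp

end LinkProduct

section Swap

variable {A₀ Ab₀ Ab₁ A₁ B₀ Bb₀ Bb₁ B₁ : Type*}

/-- The Choi matrix of a bipartite channel with the roles of the two parties exchanged. -/
def swapParties (J : ChannelChoi A₀ A₁ B₀ B₁) : ChannelChoi B₀ B₁ A₀ A₁ :=
  J.submatrix (fun x => (x.2.2.1, x.2.2.2, x.1, x.2.1)) fun x => (x.2.2.1, x.2.2.2, x.1, x.2.1)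

/-- The Choi matrix of a bipartite superchannel with the roles of the two parties exchanged. -/
def scSwapParties (JΘ : SuperchannelChoi A₀ Ab₀ Ab₁ A₁ B₀ Bb₀ Bb₁ B₁) :
    SuperchannelChoi B₀ Bb₀ Bb₁ B₁ A₀ Ab₀ Ab₁ A₁ :=
  JΘ.submatrix
    (fun x => (x.2.2.2.2.1, x.2.2.2.2.2.1, x.2.2.2.2.2.2.1, x.2.2.2.2.2.2.2,
      x.1, x.2.1, x.2.2.1, x.2.2.2.1))
    fun x => (x.2.2.2.2.1, x.2.2.2.2.2.1, x.2.2.2.2.2.2.1, x.2.2.2.2.2.2.2,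
      x.1, x.2.1, x.2.2.1, x.2.2.2.1)

lemma linkOut_scSwapParties [Fintype Ab₀] [Fintype Ab₁] [Fintype Bb₀] [Fintype Bb₁]
    (JΘ : SuperchannelChoi A₀ Ab₀ Ab₁ A₁ B₀ Bb₀ Bb₁ B₁) (JN : ChannelChoi Ab₀ Ab₁ Bb₀ Bb₁) :
    linkOut (scSwapParties JΘ) (swapParties JN) = swapParties (linkOut JΘ JN) := by
  let e : Bb₀ × Bb₁ × Ab₀ × Ab₁ ≃ Ab₀ × Ab₁ × Bb₀ × Bb₁ :=
    { toFun := fun z => (z.2.2.1, z.2.2.2, z.1, z.2.1)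
      invFun := fun z => (z.2.2.1, z.2.2.2, z.1, z.2.1) }
  ext x y
  exact Fintype.sum_equiv e _ _ fun z => Fintype.sum_equiv e _ _ fun w => rfl

lemma trA1_swapParties_eq_piFst_iff [Fintype B₀] [Fintype B₁] [DecidableEq B₀]
    {J : ChannelChoi A₀ A₁ B₀ B₁} :
    trA1 (swapParties J) = piFst (trA0A1 (swapParties J)) ↔ trB1 J = piB0 (trB0B1 J) := by
  constructor <;> intro h <;> ext x y
  · exact congrFun₂ h (x.2.2, x.1, x.2.1) (y.2.2, y.1, y.2.1)
  · exact congrFun₂ h (x.2.1, x.2.2, x.1) (y.2.1, y.2.2, y.1)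

lemma scTrAb0A1_scSwapParties_eq_piFst [Fintype B₀] [Fintype Bb₀] [Fintype B₁] [DecidableEq B₀]
    {JΘ : SuperchannelChoi A₀ Ab₀ Ab₁ A₁ B₀ Bb₀ Bb₁ B₁}
    (h : scTrBb0B1 JΘ = piB0sc (scTrB0Bb0B1 JΘ)) :
    scTrAb0A1 (scSwapParties JΘ) = piFst (scTrA0Ab0A1 (scSwapParties JΘ)) := by
  ext ⟨b₀, bb₁, a₀, ab₀, ab₁, a₁⟩ ⟨b₀', bb₁', a₀', ab₀', ab₁', a₁'⟩
  exact congrFun₂ h (a₀, ab₀, ab₁, a₁, b₀, bb₁) (a₀', ab₀', ab₁', a₁', b₀', bb₁')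

lemma scTrA1_scSwapParties_eq_piAb1 [Fintype Bb₁] [Fintype B₁] [DecidableEq Bb₁]
    {JΘ : SuperchannelChoi A₀ Ab₀ Ab₁ A₁ B₀ Bb₀ Bb₁ B₁}
    (h : scTrB1 JΘ = piBb1sc (scTrBb1B1 JΘ)) :
    scTrA1 (scSwapParties JΘ) = piAb1 (scTrAb1A1 (scSwapParties JΘ)) := by
  ext ⟨b₀, bb₀, bb₁, a₀, ab₀, ab₁, a₁⟩ ⟨b₀', bb₀', bb₁', a₀', ab₀', ab₁', a₁'⟩
  exact congrFun₂ h (a₀, ab₀, ab₁, a₁, b₀, bb₀, bb₁) (a₀', ab₀', ab₁', a₁', b₀', bb₀', bb₁')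

end Swap

section Feasible

variable {A₀ A₁ B₀ B₁ : Type*}
  [Fintype A₀] [Fintype A₁] [Fintype B₀] [Fintype B₁] [DecidableEq A₀] [DecidableEq B₀]

/-- `(Y, l)` is a feasible point of the SDP defining `Λ(J)`, with objective value `l`. -/
def IsFeasible (J Y : ChannelChoi A₀ A₁ B₀ B₁) (l : ℝ) : Prop :=
  LoewnerLE J Y ∧ trA1B1 Y = l • (1 : Matrix (A₀ × B₀) (A₀ × B₀) ℂ) ∧ NS Y

-- Without a lower bound on the feasible values, the `sInf` in `Λ` would be the junk value `0`.
lemma IsFeasible.trace_re_div_card_le [Nonempty A₀] [Nonempty B₀] {J Y : ChannelChoi A₀ A₁ B₀ B₁}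
    {l : ℝ} (h : IsFeasible J Y l) : J.trace.re / Fintype.card (A₀ × B₀) ≤ l := by
  have htr : Y.trace = l * Fintype.card (A₀ × B₀) := by
    calc Y.trace = (trA1B1 Y).trace := by
          simp only [trace, diag_apply, trA1B1, Fintype.sum_prod_type]
          exact Finset.sum_congr rfl fun a₀ _ => Finset.sum_comm
      _ = _ := by rw [h.2.1, trace_smul, trace_one, Complex.real_smul]
  have hle : J.trace.re ≤ Y.trace.re := by
    have := (Complex.le_def.1 h.1.trace_nonneg).1
    simpa [trace_sub] using this
  rw [div_le_iff₀ (by positivity)]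
  simpa [htr] using hle

lemma IsFeasible.lam_le [Nonempty A₀] [Nonempty B₀] {J Y : ChannelChoi A₀ A₁ B₀ B₁} {l : ℝ}
    (h : IsFeasible J Y l) : Lam J ≤ l :=
  csInf_le ⟨_, fun _ ⟨_, hY⟩ => IsFeasible.trace_re_div_card_le hY⟩ ⟨Y, h⟩

end Feasible

section NonsignallingSuperchannel

variable {A₀ Ab₀ Ab₁ A₁ B₀ Bb₀ Bb₁ B₁ : Type*}
  [Fintype A₀] [Fintype Ab₀] [Fintype Ab₁] [Fintype A₁]
  [Fintype B₀] [Fintype Bb₀] [Fintype Bb₁] [Fintype B₁]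
  [DecidableEq A₀] [DecidableEq Ab₁] [DecidableEq B₀] [DecidableEq Bb₁]

/-- The Choi-matrix conditions of a non-signalling bipartite superchannel. -/
structure IsNonsignallingSuperchannel (JΘ : SuperchannelChoi A₀ Ab₀ Ab₁ A₁ B₀ Bb₀ Bb₁ B₁) :
    Prop where
  posSemidef : JΘ.PosSemidef
  scTP_eq_one : scTP JΘ = 1
  scTrAb0A1_eq_piFst : scTrAb0A1 JΘ = piFst (scTrA0Ab0A1 JΘ)
  scTrA1_eq_piAb1 : scTrA1 JΘ = piAb1 (scTrAb1A1 JΘ)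
  scTrBb0B1_eq_piB0sc : scTrBb0B1 JΘ = piB0sc (scTrB0Bb0B1 JΘ)
  scTrB1_eq_piBb1sc : scTrB1 JΘ = piBb1sc (scTrBb1B1 JΘ)

variable [DecidableEq Ab₀] [DecidableEq Bb₀] {JΘ : SuperchannelChoi A₀ Ab₀ Ab₁ A₁ B₀ Bb₀ Bb₁ B₁}
  {JN Y : ChannelChoi Ab₀ Ab₁ Bb₀ Bb₁}

lemma IsNonsignallingSuperchannel.ns_linkOut [Nonempty A₀] [Nonempty B₀]
    (hΘ : IsNonsignallingSuperchannel JΘ) (hN : NS JN) : NS (linkOut JΘ JN) := by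
  refine ⟨trA1_linkOut_eq_piFst hΘ.scTrAb0A1_eq_piFst hΘ.scTrA1_eq_piAb1 hN.1, ?_⟩
  rw [← trA1_swapParties_eq_piFst_iff, ← linkOut_scSwapParties]
  exact trA1_linkOut_eq_piFst (scTrAb0A1_scSwapParties_eq_piFst hΘ.scTrBb0B1_eq_piB0sc)
    (scTrA1_scSwapParties_eq_piAb1 hΘ.scTrB1_eq_piBb1sc)
    (trA1_swapParties_eq_piFst_iff.2 hN.2)

lemma IsNonsignallingSuperchannel.isFeasible_linkOut [Nonempty A₀] [Nonempty B₀] [Nonempty Ab₁]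
    [Nonempty Bb₁] (hΘ : IsNonsignallingSuperchannel JΘ) {l : ℝ} (h : IsFeasible JN Y l) :
    IsFeasible (linkOut JΘ JN) (linkOut JΘ Y) l :=
  ⟨loewnerLE_linkOut hΘ.posSemidef h.1,
    trA1B1_linkOut_eq_smul_one hΘ.scTP_eq_one hΘ.scTrA1_eq_piAb1 hΘ.scTrB1_eq_piBb1sc h.2.1,
    hΘ.ns_linkOut h.2.2⟩

lemma IsNonsignallingSuperchannel.lam_linkOut_le [Nonempty A₀] [Nonempty B₀] [Nonempty Ab₁]
    [Nonempty Bb₁] (hΘ : IsNonsignallingSuperchannel JΘ) (hN : ∃ l Y, IsFeasible JN Y l) :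
    Lam (linkOut JΘ JN) ≤ Lam JN :=
  le_csInf hN fun _ ⟨_, hY⟩ => (hΘ.isFeasible_linkOut hY).lam_le

end NonsignallingSuperchannel

section NoiselessChannel

open scoped Kronecker

variable {m : ℕ}

lemma classChoi_eq_diagonal : classChoi m = diagonal fun x => if x.1 = x.2 then 1 else 0 := by
  ext x y
  simp only [classChoi, diagonal_apply, Prod.ext_iff]
  grind

lemma posSemidef_one_sub_classChoi : (1 - classChoi m).PosSemidef := by
  rw [classChoi_eq_diagonal, ← diagonal_one, diagonal_sub]
  refine PosSemidef.diagonal fun x => ?_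
  simp only [Pi.zero_apply]
  split_ifs <;> simp

lemma trOut_classChoi : trOut (classChoi m) = 1 := by
  ext s s'
  simp [trOut, classChoi_eq_diagonal, diagonal_apply, one_apply]

lemma trOut_one_sub_classChoi : trOut (1 - classChoi m) = ((m : ℂ) - 1) • 1 := by
  have hone : trOut (1 : Matrix (Fin m × Fin m) (Fin m × Fin m) ℂ) = (m : ℂ) • 1 := by
    ext s s'
    simp [trOut, one_apply]
  have hsub : trOut (1 - classChoi m) =
      trOut (1 : Matrix (Fin m × Fin m) (Fin m × Fin m) ℂ) - trOut (classChoi m) := by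
    ext s s'
    simp only [trOut, Matrix.sub_apply, Finset.sum_sub_distrib]
  rw [hsub, hone, trOut_classChoi, sub_smul, one_smul]

lemma smul_Jprime_apply (hm : m ≠ 0) (x y : Fin m × Fin m × Fin m × Fin m) :
    ((m : ℂ) • Jprime m) x y = upsChoi m x y + ((m : ℂ) - 1)⁻¹ *
      ((1 - classChoi m) (x.1, x.2.2.2) (y.1, y.2.2.2) *
        (1 - classChoi m) (x.2.2.1, x.2.1) (y.2.2.1, y.2.1)) := by
  have hm' : (m : ℂ) ≠ 0 := Nat.cast_ne_zero.2 hm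
  simp only [Matrix.smul_apply, smul_eq_mul, Jprime, upsChoi, mul_add, mul_inv, ← mul_assoc,
    mul_inv_cancel₀ hm', one_mul]

lemma upsChoi_loewnerLE_smul_Jprime (hm : m ≠ 0) :
    LoewnerLE (upsChoi m) ((m : ℂ) • Jprime m) := by
  let pairs (x : Fin m × Fin m × Fin m × Fin m) := ((x.1, x.2.2.2), (x.2.2.1, x.2.1))
  have hdiff : (m : ℂ) • Jprime m - upsChoi m = ((m : ℂ) - 1)⁻¹ •
      ((1 - classChoi m) ⊗ₖ (1 - classChoi m)).submatrix pairs pairs := by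
    ext x y
    rw [Matrix.sub_apply, smul_Jprime_apply hm, add_sub_cancel_left]
    rfl
  have hcoeff : 0 ≤ ((m : ℂ) - 1)⁻¹ := by
    rw [← Nat.cast_pred (Nat.pos_of_ne_zero hm)]
    positivity
  rw [LoewnerLE, hdiff]
  exact ((posSemidef_one_sub_classChoi.kronecker posSemidef_one_sub_classChoi).submatrix
    pairs).smul hcoeff

lemma trA1_smul_Jprime (hm : 2 ≤ m) : trA1 ((m : ℂ) • Jprime m) = 1 := by
  have hm' : (m : ℂ) - 1 ≠ 0 := sub_ne_zero.2 (by exact_mod_cast (by omega : m ≠ 1))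
  ext ⟨a, b, c⟩ ⟨a', b', c'⟩
  have hC := congrFun₂ (trOut_classChoi (m := m)) b b'
  have hD := congrFun₂ (trOut_one_sub_classChoi (m := m)) b b'
  simp only [trOut] at hC hD
  calc trA1 ((m : ℂ) • Jprime m) (a, b, c) (a', b', c')
      = classChoi m (a, c) (a', c') * (1 : Matrix (Fin m) (Fin m) ℂ) b b' +
        (1 - classChoi m) (a, c) (a', c') * (1 : Matrix (Fin m) (Fin m) ℂ) b b' := by
        simp only [trA1, smul_Jprime_apply (by omega : m ≠ 0), upsChoi, Finset.sum_add_distrib,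
          ← Finset.mul_sum, hC, hD, Matrix.smul_apply, smul_eq_mul]
        field_simp
    _ = (1 : Matrix (Fin m × Fin m × Fin m) (Fin m × Fin m × Fin m) ℂ) (a, b, c) (a', b', c') := by
        simp only [Matrix.sub_apply, one_apply, Prod.mk.injEq]
        split_ifs <;> grind

lemma swapParties_smul_Jprime : swapParties ((m : ℂ) • Jprime m) = (m : ℂ) • Jprime m := by
  ext x y
  simp only [swapParties, submatrix_apply, Matrix.smul_apply, Jprime, mul_comm]

lemma ns_smul_Jprime (hm : 2 ≤ m) : NS ((m : ℂ) • Jprime m) := by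
  have : NeZero m := ⟨by omega⟩
  have hA : trA1 ((m : ℂ) • Jprime m) = piFst (trA0A1 ((m : ℂ) • Jprime m)) := by
    refine eq_piFst_trInp_of_eq_idFst (G := 1) ?_
    ext x y
    simp only [trA1_smul_Jprime hm, idFst, one_apply, Prod.ext_iff]
    grind
  refine ⟨hA, trA1_swapParties_eq_piFst_iff.1 ?_⟩
  rwa [swapParties_smul_Jprime]

lemma trA1B1_smul_Jprime (hm : 2 ≤ m) :
    trA1B1 ((m : ℂ) • Jprime m) = (m : ℝ) • (1 : Matrix (Fin m × Fin m) (Fin m × Fin m) ℂ) := by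
  ext x y
  calc trA1B1 ((m : ℂ) • Jprime m) x y
      = ∑ b₁, trA1 ((m : ℂ) • Jprime m) (x.1, x.2, b₁) (y.1, y.2, b₁) := Finset.sum_comm
    _ = _ := by simp [trA1_smul_Jprime hm, one_apply, Prod.ext_iff]

lemma isFeasible_upsChoi (hm : 2 ≤ m) : IsFeasible (upsChoi m) ((m : ℂ) • Jprime m) m :=
  ⟨upsChoi_loewnerLE_smul_Jprime (by omega), trA1B1_smul_Jprime hm, ns_smul_Jprime hm⟩

end NoiselessChannel


/-- Any non-signalling bipartite superchannel applied to the noiseless bidirectional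
classical channel `Υ_m` yields a channel whose max-relative entropy of bidirectional
classical communication is at most `log m`: for the link product `J^out` of a
non-signalling bipartite superchannel Choi matrix `J^Θ` with the Choi matrix
`C = C_{Ā₀B̄₁} ⊠ C_{B̄₀Ā₁}` of `Υ_m`, one has `Λ(J^out) ≤ m`. -/
theorem lam_superchannel_ups_le
    {A0 A1 B0 B1 : Type*}
    [Fintype A0] [Fintype A1] [Fintype B0] [Fintype B1]
    [DecidableEq A0] [DecidableEq A1] [DecidableEq B0] [DecidableEq B1]
    [Nonempty A0] [Nonempty A1] [Nonempty B0] [Nonempty B1]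
    (m : ℕ) (hm : 2 ≤ m)
    (JΘ : Matrix (A0 × Fin m × Fin m × A1 × B0 × Fin m × Fin m × B1)
      (A0 × Fin m × Fin m × A1 × B0 × Fin m × Fin m × B1) ℂ)
    (hΘ₁ : JΘ.PosSemidef)
    (hΘ₂ : scTP JΘ = 1)
    (hΘ₃ : scTrAb0A1 JΘ = piFst (scTrA0Ab0A1 JΘ))
    (hΘ₄ : scTrA1 JΘ = piAb1 (scTrAb1A1 JΘ))
    (hΘ₅ : scTrBb0B1 JΘ = piB0sc (scTrB0Bb0B1 JΘ))
    (hΘ₆ : scTrB1 JΘ = piBb1sc (scTrBb1B1 JΘ)) :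
    Lam (linkOut JΘ (upsChoi m)) ≤ m := by
  have : NeZero m := ⟨by omega⟩
  have hΘ : IsNonsignallingSuperchannel JΘ := ⟨hΘ₁, hΘ₂, hΘ₃, hΘ₄, hΘ₅, hΘ₆⟩
  have hΥ : IsFeasible (upsChoi m) ((m : ℂ) • Jprime m) m := isFeasible_upsChoi hm
  calc Lam (linkOut JΘ (upsChoi m)) ≤ Lam (upsChoi m) := hΘ.lam_linkOut_le ⟨_, _, hΥ⟩
    _ ≤ m := hΥ.lam_le
end
end
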